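/- For every tour σ on {1,…,r} with incidence vector x and positions u, the 2PATH inequality u_i − u_k + (2r−3)·x_{ik} + (r−4)·x_{ki} + (r−1)(x_{ij} + x_{jk}) ≤ 2r − 4 holds for all pairwise distinct i, j, k ∈ {2,…,r}. -/

import Mathlib

/-- A tour on the node set `Fin r`: a permutation consisting of a single cycle
through all `r` nodes. -/
def IsTour {r : ℕ} (σ : Equiv.Perm (Fin r)) : Prop :=
  σ.IsCycle ∧ ∀ i, σ i ≠ i

/-- The incidence vector of a tour `σ`: `x i j = 1` iff `j = σ i`. -/
def incidence {r : ℕ} (σ : Equiv.Perm (Fin r)) (i j : Fin r) : ℝ :=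
  if σ i = j then 1 else 0

/-- `u` gives the positions of the nodes along the tour `σ`: `u i` is the
(unique) integer in `{1, …, r}` with `σ^(u i − 1) 1 = i` (node `1` is index `0`). -/
def IsPositions {r : ℕ} [NeZero r] (σ : Equiv.Perm (Fin r)) (u : Fin r → ℕ) : Prop :=
  ∀ i, 1 ≤ u i ∧ u i ≤ r ∧ (σ ^ (u i - 1)) (0 : Fin r) = i

/-!
The 2PATH inequality is a lifting of `u i - u k + (r - 1) (x i j + x j k) ≤ 2 r - 4`. Since nodes
other than `0` have positions in `[2, r]`, and positions increase by one along each arc into such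
a node, an arc of the path `i → j → k` lowers the bound `r - 2` on `u i - u k` by one, and both arcs
together force `u i - u k = -2`. If the arc `(i, k)` is used, it excludes the other three arcs, and
the coefficient `2 r - 3` makes the inequality tight. If `(k, i)` is used, then `u i - u k = 1` and
at most one arc of the path is used, which leaves exactly `r - 4` for the coefficient of `x k i`.
-/

namespace IsTour

variable {r : ℕ} {σ : Equiv.Perm (Fin r)}

theorem orderOf_eq (hσ : IsTour σ) : orderOf σ = r := by
  have support_eq : σ.support = Finset.univ :=
    Finset.eq_univ_of_forall fun a => Equiv.Perm.mem_support.mpr (hσ.2 a)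
  rw [hσ.1.orderOf, support_eq, Finset.card_fin]

theorem injOn_pow_apply (hσ : IsTour σ) (a : Fin r) :
    Set.InjOn (fun n : ℕ => (σ ^ n) a) (Set.Iio r) := by
  intro m hm n hn h
  have pow_eq : σ ^ m = σ ^ n := hσ.1.pow_eq_pow_iff.mpr ⟨a, hσ.2 a, h⟩
  rw [← hσ.orderOf_eq] at hm hn
  exact pow_injOn_Iio_orderOf hm hn pow_eq

end IsTour

namespace IsPositions

variable {r : ℕ} [NeZero r] {σ : Equiv.Perm (Fin r)} {u : Fin r → ℕ}

theorem two_le (hu : IsPositions σ u) {a : Fin r} (ha : a ≠ 0) : 2 ≤ u a := by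
  obtain ⟨one_le, -, pow_apply⟩ := hu a
  have ne_one : u a ≠ 1 := fun h => ha (by simpa [h] using pow_apply.symm)
  omega

theorem apply_eq_add_one (hu : IsPositions σ u) (hσ : IsTour σ) {a : Fin r} (ha : σ a ≠ 0) :
    u (σ a) = u a + 1 := by
  obtain ⟨m, hm⟩ := Nat.exists_eq_add_of_le' (hu.two_le ha)
  obtain ⟨-, le_r, pow_apply⟩ := hu (σ a)
  obtain ⟨one_le_a, le_r_a, pow_apply_a⟩ := hu a
  have pow_m : (σ ^ m) 0 = a := by
    rw [show u (σ a) - 1 = m + 1 by omega, pow_succ', Equiv.Perm.mul_apply] at pow_apply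
    exact σ.injective pow_apply
  have m_eq : m = u a - 1 :=
    hσ.injOn_pow_apply 0 (Set.mem_Iio.mpr (by omega)) (Set.mem_Iio.mpr (by omega))
      (pow_m.trans pow_apply_a.symm)
  omega

theorem cast_eq_add_one (hu : IsPositions σ u) (hσ : IsTour σ) {a b : Fin r} (hb : b ≠ 0)
    (hab : σ a = b) : (u b : ℝ) = u a + 1 := by
  subst hab
  exact_mod_cast hu.apply_eq_add_one hσ hb

theorem sub_add_incidence_path_le (hu : IsPositions σ u) (hσ : IsTour σ) (i : Fin r)
    {j k : Fin r} (hj : j ≠ 0) (hk : k ≠ 0) :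
    (u i : ℝ) - u k + (r - 1) * (incidence σ i j + incidence σ j k) ≤ 2 * r - 4 := by
  have le_r (a : Fin r) : (u a : ℝ) ≤ r := by exact_mod_cast (hu a).2.1
  have two_le_j : (2 : ℝ) ≤ u j := by exact_mod_cast hu.two_le hj
  have two_le_k : (2 : ℝ) ≤ u k := by exact_mod_cast hu.two_le hk
  unfold incidence
  split_ifs with hij hjk hjk
  · linarith [hu.cast_eq_add_one hσ hj hij, hu.cast_eq_add_one hσ hk hjk]
  · linarith [hu.cast_eq_add_one hσ hj hij, le_r j]
  · linarith [hu.cast_eq_add_one hσ hk hjk, le_r i]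
  · linarith [le_r i, le_r j]

theorem not_apply_eq_of_apply_eq (hu : IsPositions σ u) (hσ : IsTour σ) {i k : Fin r}
    (hi : i ≠ 0) (hk : k ≠ 0) (hik : σ i = k) : σ k ≠ i := fun hki => by
  linarith [hu.cast_eq_add_one hσ hk hik, hu.cast_eq_add_one hσ hi hki]

theorem incidence_add_incidence_le_one (hu : IsPositions σ u) (hσ : IsTour σ) {i j k : Fin r}
    (hi : i ≠ 0) (hj : j ≠ 0) (hk : k ≠ 0) (hki : σ k = i) :
    incidence σ i j + incidence σ j k ≤ 1 := by
  unfold incidence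
  split_ifs with hij hjk
  · linarith [hu.cast_eq_add_one hσ hj hij, hu.cast_eq_add_one hσ hk hjk,
      hu.cast_eq_add_one hσ hi hki]
  all_goals norm_num

end IsPositions

theorem two_path_valid (r : ℕ) [NeZero r] (hr : 4 ≤ r)
    (σ : Equiv.Perm (Fin r)) (hσ : IsTour σ)
    (u : Fin r → ℕ) (hu : IsPositions σ u)
    (i j k : Fin r) (hi : i ≠ 0) (hj : j ≠ 0) (hk : k ≠ 0)
    (hij : i ≠ j) (hik : i ≠ k) (hjk : j ≠ k) :
    (u i : ℝ) - (u k : ℝ) + (2 * (r : ℝ) - 3) * incidence σ i k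
      + ((r : ℝ) - 4) * incidence σ k i
      + ((r : ℝ) - 1) * (incidence σ i j + incidence σ j k)
      ≤ 2 * (r : ℝ) - 4 := by
  by_cases arc_ik : σ i = k
  · have arc_ki : σ k ≠ i := hu.not_apply_eq_of_apply_eq hσ hi hk arc_ik
    have arc_ij : σ i ≠ j := arc_ik.trans_ne hjk.symm
    have arc_jk : σ j ≠ k := fun h => hij (σ.injective (arc_ik.trans h.symm))
    simp only [incidence, if_pos arc_ik, if_neg arc_ki, if_neg arc_ij, if_neg arc_jk]
    linarith [hu.cast_eq_add_one hσ hk arc_ik]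
  by_cases arc_ki : σ k = i
  · have one_le_r : (1 : ℝ) ≤ r := by exact_mod_cast (by omega : 1 ≤ r)
    have path_le := mul_le_mul_of_nonneg_left
      (hu.incidence_add_incidence_le_one hσ hi hj hk arc_ki) (sub_nonneg.mpr one_le_r)
    have ik_zero : incidence σ i k = 0 := if_neg arc_ik
    have ki_one : incidence σ k i = 1 := if_pos arc_ki
    rw [ik_zero, ki_one]
    linarith [hu.cast_eq_add_one hσ hi arc_ki]
  · have base := hu.sub_add_incidence_path_le hσ i hj hk
    have ik_zero : incidence σ i k = 0 := if_neg arc_ik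
    have ki_zero : incidence σ k i = 0 := if_neg arc_ki
    simpa only [ik_zero, ki_zero, mul_zero, add_zero] using base
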